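/- Let X be a topological space and XI its Alexandroff Noodles. Then the inversion map f ↦ f⁻¹ is continuous on Hom_p(XI). -/

import Mathlib

open Topology unitInterval

/-- The canonical projection sending `Sum.inl x` to `(x, 0)` and `Sum.inr p` to `p`;
its kernel is exactly the equivalence relation identifying each `x ∈ X` with `(x, 0)`. -/
def noodleProj (X : Type*) : X ⊕ (X × unitInterval) → X × unitInterval
  | Sum.inl x => (x, 0)
  | Sum.inr p => p

/-- The equivalence relation on `X ⊕ (X × [0,1])` identifying each `x ∈ X` with `(x, 0)`. -/
def noodleSetoid (X : Type*) : Setoid (X ⊕ (X × unitInterval)) := Setoid.ker (noodleProj X)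

/-- The Alexandroff Noodles of `X`: the quotient of the sum of `X` and `D × [0,1]`
(`D` the underlying set of `X`) identifying each `x ∈ X` with `(x, 0)`. -/
def Noodles (X : Type*) : Type _ := Quotient (noodleSetoid X)

/-- The topology of the sum of `X` and `D × [0,1]`, where `D` is the underlying set of `X`
with the discrete topology. -/
def noodleSumTop (X : Type*) [t : TopologicalSpace X] :
    TopologicalSpace (X ⊕ (X × unitInterval)) :=
  @instTopologicalSpaceSum X (X × unitInterval) t
    (@instTopologicalSpaceProd X unitInterval ⊥ inferInstance)

/-- The Alexandroff Noodles carry the quotient topology. -/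
instance noodlesTop (X : Type*) [TopologicalSpace X] : TopologicalSpace (Noodles X) :=
  (noodleSumTop X).coinduced (Quotient.mk (noodleSetoid X))

/-- The point `r_x` of the Alexandroff Noodles, for `x ∈ X` and `r ∈ [0,1]`
(so `0_x` is `noodlePt x 0`, the common image of `x` and `(x, 0)`). -/
def noodlePt {X : Type*} (x : X) (r : unitInterval) : Noodles X :=
  Quotient.mk (noodleSetoid X) (Sum.inr (x, r))

/-- The topology of pointwise convergence on the group of self-homeomorphisms of `X`,
induced by the inclusion of `Hom(X)` into the product space `X → X`. -/
def homPTop (X : Type*) [TopologicalSpace X] : TopologicalSpace (X ≃ₜ X) :=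
  TopologicalSpace.induced (fun f => (f : X → X)) inferInstance

/-!
Up to topologically indistinguishable points, a self-homeomorphism `f` of `XI` permutes the noodles
and acts on each of them by a self-homeomorphism of `[0,1]`. The main point is that `f` sends no
interior point `r_x` of a noodle to a foot `0_y`. Otherwise, let `t_x` run through the noodle of
`x`, project `f(t_x)` to the foot below it, and pull the result back by `f⁻¹`. This is a connected
set through `r_x`, and it has empty interior because the set of feet does; inside a noodle, where
`XI` looks like an interval, this forces it to be the single point `r_x`. Hence `f` maps the whole
noodle of `x` injectively into that of `y`, where the interior point `r` cannot attain the minimal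
height.

Which noodle `f` assigns to `x` is locally constant in `f`, so the theorem reduces to the continuity
of inversion for pointwise convergence of homeomorphisms of `[0,1]`.
-/

open Set Filter

section Order

variable {α β : Type*} [ConditionallyCompleteLinearOrder α] [DenselyOrdered α]
  [TopologicalSpace α] [OrderTopology α] [LinearOrder β] [TopologicalSpace β]
  [OrderClosedTopology β]

theorem exists_lt_and_exists_gt_of_injOn_Ioo {φ : α → β} {a b r : α}
    (hcont : ContinuousOn φ (Ioo a b)) (hinj : InjOn φ (Ioo a b)) (hr : r ∈ Ioo a b) :
    (∃ s ∈ Ioo a b, φ s < φ r) ∧ ∃ s ∈ Ioo a b, φ r < φ s := by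
  obtain ⟨l, hal, hlr⟩ := exists_between hr.1
  obtain ⟨u, hru, hub⟩ := exists_between hr.2
  have hl : l ∈ Ioo a b := ⟨hal, hlr.trans hr.2⟩
  have hu : u ∈ Ioo a b := ⟨hr.1.trans hru, hub⟩
  rcases hcont.strictMonoOn_of_injOn_Ioo (hr.1.trans hr.2) hinj with hmono | hanti
  · exact ⟨⟨l, hl, hmono hl hr hlr⟩, u, hu, hmono hr hu hru⟩
  · exact ⟨⟨u, hu, hanti hr hu hru⟩, l, hl, hanti hl hr hlr⟩

theorem homeomorph_symm_apply_mem_uIcc_iff (h : α ≃ₜ β) {a b : α} {u : β} :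
    h.symm u ∈ uIcc a b ↔ u ∈ uIcc (h a) (h b) := by
  constructor
  · intro hu
    rw [← h.apply_symm_apply u]
    rcases h.continuous.strictMono_of_inj h.injective with hmono | hanti
    · exact hmono.monotone.mapsTo_uIcc hu
    · exact hanti.antitone.mapsTo_uIcc hu
  · intro hu
    obtain ⟨c, hc, rfl⟩ := intermediate_value_uIcc h.continuous.continuousOn hu
    rwa [h.symm_apply_apply]

theorem eventually_homeomorph_symm_apply_notMem_uIcc {ι : Type*} {l : Filter ι} {g : ι → α ≃ₜ β}
    {h : α ≃ₜ β} (hg : ∀ a, Tendsto (fun i => g i a) l (𝓝 (h a))) {a b : α} {u : β}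
    (hu : h.symm u ∉ uIcc a b) : ∀ᶠ i in l, (g i).symm u ∉ uIcc a b := by
  rw [homeomorph_symm_apply_mem_uIcc_iff, uIcc, mem_Icc, not_and_or, not_le, not_le] at hu
  simp_rw [homeomorph_symm_apply_mem_uIcc_iff]
  rcases hu with hlt | hgt
  · filter_upwards [((hg a).min (hg b)).eventually_const_lt hlt] with i hi
    exact fun hmem => hi.not_ge hmem.1
  · filter_upwards [((hg a).max (hg b)).eventually_lt_const hgt] with i hi
    exact fun hmem => hi.not_ge hmem.2

theorem tendsto_homeomorph_symm_apply [BoundedOrder α] {ι : Type*} {l : Filter ι}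
    {g : ι → α ≃ₜ β} {h : α ≃ₜ β} (hg : ∀ a, Tendsto (fun i => g i a) l (𝓝 (h a))) (u : β) :
    Tendsto (fun i => (g i).symm u) l (𝓝 (h.symm u)) := by
  refine tendsto_order.2 ⟨fun a ha => ?_, fun b hb => ?_⟩
  · have hu : h.symm u ∉ uIcc ⊥ a := by simpa [uIcc_of_le] using ha
    filter_upwards [eventually_homeomorph_symm_apply_notMem_uIcc hg hu] with i hi
    simpa [uIcc_of_le] using hi
  · have hu : h.symm u ∉ uIcc b ⊤ := by simpa [uIcc_of_le] using hb
    filter_upwards [eventually_homeomorph_symm_apply_notMem_uIcc hg hu] with i hi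
    simpa [uIcc_of_le] using hi

end Order

theorem tendsto_nhds_of_eventually_inseparable {ι Y : Type*} [TopologicalSpace Y] {l : Filter ι}
    {u v : ι → Y} {a : Y} (hv : Tendsto v l (𝓝 a)) (huv : ∀ᶠ i in l, Inseparable (u i) (v i)) :
    Tendsto u l (𝓝 a) := by
  refine tendsto_nhds.2 fun V hV ha => ?_
  filter_upwards [hv (hV.mem_nhds ha), huv] with i hi hins
  exact (hins.mem_open_iff hV).2 hi

theorem dense_Ioo_zero_one : Dense (Ioo (0 : I) 1) := by
  rw [dense_iff_closure_eq, closure_Ioo zero_ne_one]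
  exact Icc_bot_top

namespace Noodles

variable {X : Type*}

/-- The inverse of `(x, r) ↦ noodlePt x r`, splitting a point of `XI` into the foot of its noodle
and its height. -/
def coords (p : Noodles X) : X × I :=
  Quotient.lift (s := noodleSetoid X) (noodleProj X) (fun _ _ h => h) p

/-- The retraction of `XI` onto `X` sending `r_x` to `x`. -/
def base (p : Noodles X) : X := p.coords.1

/-- The height function of `XI`, sending `r_x` to `r`. -/
def height (p : Noodles X) : I := p.coords.2

open Classical in
/-- The retraction of `XI` onto the noodle of `x`, in the coordinate of that noodle: all other
noodles are collapsed to height `0`. -/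
noncomputable def heightOn (x : X) (p : Noodles X) : I := if p.base = x then p.height else 0

@[simp] theorem base_noodlePt (x : X) (r : I) : (noodlePt x r).base = x := rfl

@[simp] theorem height_noodlePt (x : X) (r : I) : (noodlePt x r).height = r := rfl

@[simp] theorem noodlePt_base_height (p : Noodles X) : noodlePt p.base p.height = p := by
  induction p using Quotient.inductionOn with
  | h a => exact Quotient.sound (rfl : noodleProj X _ = noodleProj X _)

theorem ext_base_height {p q : Noodles X} (hbase : p.base = q.base)
    (hheight : p.height = q.height) : p = q := by
  rw [← noodlePt_base_height p, hbase, hheight, noodlePt_base_height]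

theorem noodlePt_injective (x : X) : Function.Injective (noodlePt x) :=
  fun _ _ h => congrArg height h

theorem heightOn_base (p : Noodles X) : heightOn p.base p = p.height := by simp [heightOn]

theorem heightOn_pos_iff {x : X} {p : Noodles X} :
    0 < heightOn x p ↔ p.base = x ∧ 0 < p.height := by
  by_cases h : p.base = x <;> simp [heightOn, h]

theorem heightOn_injOn (x : X) : InjOn (heightOn x) {p | 0 < heightOn x p} := by
  intro p hp q hq hpq
  obtain ⟨rfl, -⟩ := heightOn_pos_iff.1 hp
  obtain ⟨hbase, -⟩ := heightOn_pos_iff.1 hq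
  refine ext_base_height hbase.symm ?_
  rw [← heightOn_base p, hpq, ← hbase, heightOn_base]

section Topology

variable [TopologicalSpace X]

theorem continuous_iff {Y : Type*} [TopologicalSpace Y] {φ : Noodles X → Y} :
    Continuous φ ↔
      Continuous (fun x => φ (noodlePt x 0)) ∧ ∀ x, Continuous fun r => φ (noodlePt x r) := by
  have mk_inl (x : X) : Quotient.mk (noodleSetoid X) (Sum.inl x) = noodlePt x 0 :=
    Quotient.sound (rfl : noodleProj X _ = noodleProj X _)
  have hmk : Continuous φ ↔
      Continuous[noodleSumTop X, _] fun a => φ (Quotient.mk (noodleSetoid X) a) :=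
    continuous_coinduced_dom
  rw [hmk, noodleSumTop, @continuous_sum_dom _ _ _ _ (_) (_)]
  refine and_congr ?_ ?_
  · simp only [Function.comp_def, mk_inl]
  · let : TopologicalSpace X := ⊥
    have : DiscreteTopology X := ⟨rfl⟩
    exact continuous_prod_of_discrete_left

theorem continuous_noodlePt (x : X) : Continuous (noodlePt x) :=
  (continuous_iff.1 continuous_id).2 x

theorem continuous_noodlePt_zero : Continuous fun x : X => noodlePt x 0 :=
  (continuous_iff.1 continuous_id).1

theorem continuous_base : Continuous (base : Noodles X → X) :=
  continuous_iff.2 ⟨continuous_id, fun _ => continuous_const⟩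

theorem continuous_height : Continuous (height : Noodles X → I) :=
  continuous_iff.2 ⟨continuous_const, fun _ => continuous_id⟩

theorem continuous_heightOn (x : X) : Continuous (heightOn x) := by
  refine continuous_iff.2 ⟨?_, fun y => ?_⟩
  · simp only [heightOn, height_noodlePt, ite_self]
    exact continuous_const
  · by_cases h : y = x
    · simp [heightOn, h, continuous_id']
    · simp [heightOn, h, continuous_const]

theorem isOpen_heightOn_pos (x : X) : IsOpen {p | 0 < heightOn x p} :=
  isOpen_lt continuous_const (continuous_heightOn x)

theorem noodlePt_mem_closure_image_Ioo (x : X) (t : I) :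
    noodlePt x t ∈ closure (noodlePt x '' Ioo 0 1) :=
  map_mem_closure (continuous_noodlePt x) (dense_Ioo_zero_one t) (mapsTo_image _ _)

theorem interior_height_eq_zero : interior {p : Noodles X | p.height = 0} = ∅ := by
  rw [interior_eq_empty_iff_dense_compl]
  intro p
  rw [← noodlePt_base_height p]
  refine closure_mono ?_ (noodlePt_mem_closure_image_Ioo p.base p.height)
  rintro _ ⟨t, ht, rfl⟩
  exact ht.1.ne'

theorem subset_singleton_of_isPreconnected_of_interior_eq_empty {S : Set (Noodles X)}
    (hconn : IsPreconnected S) (hint : interior S = ∅) {p : Noodles X} (hp : p ∈ S)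
    (hpos : 0 < p.height) : S ⊆ {p} := by
  set ρ := heightOn p.base with hρ
  have hρp : 0 < ρ p := by rwa [hρ, heightOn_base]
  have hord : OrdConnected (ρ '' S) :=
    (hconn.image ρ (continuous_heightOn _).continuousOn).ordConnected
  intro q hq
  by_contra hqp
  have hne : ρ q ≠ ρ p := fun h => hqp (heightOn_injOn p.base (h.trans_gt hρp) hρp h)
  have hsub : ρ ⁻¹' uIoo (ρ q) (ρ p) ⊆ interior S := by
    refine interior_maximal (fun a ha => ?_) (isOpen_Ioo.preimage (continuous_heightOn _))
    obtain ⟨b, hb, hab⟩ := hord.uIcc_subset ⟨q, hq, rfl⟩ ⟨p, hp, rfl⟩ (uIoo_subset_uIcc_self ha)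
    have hpos : 0 < ρ a := unitInterval.nonneg'.trans_lt ha.1
    rwa [← heightOn_injOn p.base (hab.trans_gt hpos) hpos hab]
  obtain ⟨k, hk⟩ : (uIoo (ρ q) (ρ p)).Nonempty := nonempty_uIoo.2 hne
  have hkS : noodlePt p.base k ∈ interior S := hsub (by simpa [hρ, heightOn] using hk)
  simp [hint] at hkS

theorem base_eq_of_isPreconnected {S : Set (Noodles X)} (hconn : IsPreconnected S)
    (hpos : ∀ p ∈ S, 0 < p.height) {p q : Noodles X} (hp : p ∈ S) (hq : q ∈ S) :
    q.base = p.base := by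
  have hopen : IsOpen (⋃ x ≠ p.base, {q : Noodles X | 0 < heightOn x q}) :=
    isOpen_biUnion fun x _ => isOpen_heightOn_pos x
  have hdisj : Disjoint {q : Noodles X | 0 < heightOn p.base q}
      (⋃ x ≠ p.base, {q : Noodles X | 0 < heightOn x q}) := by
    simp only [disjoint_left, mem_iUnion, mem_ofPred_eq, heightOn_pos_iff]
    grind
  have hcover : S ⊆ {q | 0 < heightOn p.base q} ∪
      ⋃ x ≠ p.base, {q : Noodles X | 0 < heightOn x q} := by
    intro q hq
    have := hpos q hq
    simp only [mem_union, mem_iUnion, mem_ofPred_eq, heightOn_pos_iff]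
    grind
  have hsub := hconn.subset_left_of_subset_union (isOpen_heightOn_pos _) hopen hdisj hcover
    ⟨p, hp, heightOn_pos_iff.2 ⟨rfl, hpos p hp⟩⟩
  exact (heightOn_pos_iff.1 (hsub hq)).1

theorem noodlePt_specializes_of_mem_closure {w : X} {p : Noodles X}
    (hp : p ∈ closure (base ⁻¹' {w})) : noodlePt w p.height ⤳ p := by
  rcases eq_or_ne p.height 0 with hzero | hne
  · have hw : w ⤳ p.base := specializes_iff_mem_closure.2 <|
      map_mem_closure continuous_base hp fun _ h => h
    have hp0 : noodlePt p.base 0 = p := by rw [← hzero, noodlePt_base_height]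
    simpa only [hzero, hp0] using hw.map continuous_noodlePt_zero
  · obtain ⟨q, hq, hqw⟩ := mem_closure_iff.1 hp _ (isOpen_heightOn_pos p.base)
      (heightOn_pos_iff.2 ⟨rfl, unitInterval.pos_iff_ne_zero.2 hne⟩)
    have hw : w = p.base := hqw.symm.trans (heightOn_pos_iff.1 hq).1
    rw [hw, noodlePt_base_height]

end Topology

section Homeomorph

variable [TopologicalSpace X] (f : Noodles X ≃ₜ Noodles X)

theorem continuous_apply_noodlePt (x : X) : Continuous fun t => f (noodlePt x t) :=
  f.continuous.comp (continuous_noodlePt x)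

theorem base_apply_eq_of_height_apply_eq_zero {p : Noodles X} (hpos : 0 < p.height)
    (hzero : (f p).height = 0) (t : I) : (f (noodlePt p.base t)).base = (f p).base := by
  let c : I → Noodles X := fun t => f.symm (noodlePt (f (noodlePt p.base t)).base 0)
  have hc : Continuous c := f.symm.continuous.comp <| continuous_noodlePt_zero.comp <|
    continuous_base.comp (continuous_apply_noodlePt f p.base)
  have hcp : c p.height = p := by
    simp only [c, noodlePt_base_height]
    rw [← hzero, noodlePt_base_height, f.symm_apply_apply]
  have hint : interior (range c) = ∅ := by
    have hsub : range c ⊆ f ⁻¹' {q | q.height = 0} := by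
      rintro _ ⟨t, rfl⟩
      simp [c]
    refine subset_empty_iff.1 ((interior_mono hsub).trans ?_)
    rw [← f.preimage_interior, interior_height_eq_zero, preimage_empty]
  have hconst : c t = p := subset_singleton_of_isPreconnected_of_interior_eq_empty
    (isPreconnected_range hc) hint ⟨p.height, hcp⟩ hpos ⟨t, rfl⟩
  simpa [c] using congrArg (fun q => (f q).base) hconst

theorem height_apply_injOn {x w : X} {s : Set I} (hs : ∀ t ∈ s, (f (noodlePt x t)).base = w) :
    InjOn (fun t => (f (noodlePt x t)).height) s := fun t ht u hu htu =>
  noodlePt_injective x <| f.injective <| ext_base_height ((hs t ht).trans (hs u hu).symm) htu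

theorem height_apply_pos {x : X} {t : I} (ht : t ∈ Ioo 0 1) : 0 < (f (noodlePt x t)).height := by
  by_contra! hle
  have hzero : (f (noodlePt x t)).height = 0 := le_antisymm hle unitInterval.nonneg'
  have hbase := base_apply_eq_of_height_apply_eq_zero f (p := noodlePt x t) ht.1 hzero
  obtain ⟨s, -, hs⟩ := (exists_lt_and_exists_gt_of_injOn_Ioo
    (continuous_height.comp (continuous_apply_noodlePt f x)).continuousOn
    (height_apply_injOn f fun s _ => hbase s) ht).1
  exact not_lt_of_ge unitInterval.nonneg' (hs.trans_eq hzero)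

theorem base_apply_eq_of_mem_Ioo {x : X} {s t : I} (hs : s ∈ Ioo 0 1) (ht : t ∈ Ioo 0 1) :
    (f (noodlePt x t)).base = (f (noodlePt x s)).base := by
  refine base_eq_of_isPreconnected (isPreconnected_Ioo.image (fun t => f (noodlePt x t))
    (continuous_apply_noodlePt f x).continuousOn) ?_ (mem_image_of_mem _ hs) (mem_image_of_mem _ ht)
  rintro _ ⟨u, hu, rfl⟩
  exact height_apply_pos f hu

theorem height_apply_mem_Ioo {x : X} {t : I} (ht : t ∈ Ioo 0 1) :
    (f (noodlePt x t)).height ∈ Ioo 0 1 := by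
  refine ⟨height_apply_pos f ht, ?_⟩
  obtain ⟨s, -, hs⟩ := (exists_lt_and_exists_gt_of_injOn_Ioo
    (continuous_height.comp (continuous_apply_noodlePt f x)).continuousOn
    (height_apply_injOn f fun s hs => base_apply_eq_of_mem_Ioo f ht hs) ht).2
  exact hs.trans_le unitInterval.le_one'

/-- The foot of the noodle into which `f` maps the interior of the noodle of `x`. The midpoint
stands for an arbitrary interior point, see `base_apply_eq_noodleMap`. -/
noncomputable def noodleMap (x : X) : X := (f (noodlePt x ⟨1 / 2, by norm_num⟩)).base

theorem base_apply_eq_noodleMap {x : X} {t : I} (ht : t ∈ Ioo 0 1) :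
    (f (noodlePt x t)).base = noodleMap f x :=
  base_apply_eq_of_mem_Ioo f
    ⟨unitInterval.coe_pos.1 one_half_pos, unitInterval.coe_lt_one.1 one_half_lt_one⟩ ht

theorem apply_noodlePt_of_mem_Ioo {x : X} {t : I} (ht : t ∈ Ioo 0 1) :
    noodlePt (noodleMap f x) (f (noodlePt x t)).height = f (noodlePt x t) := by
  rw [← base_apply_eq_noodleMap f ht, noodlePt_base_height]

theorem noodleMap_symm_noodleMap (x : X) : noodleMap f.symm (noodleMap f x) = x := by
  obtain ⟨t, ht⟩ : (Ioo (0 : I) 1).Nonempty := nonempty_Ioo.2 zero_lt_one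
  rw [← base_apply_eq_noodleMap f.symm (height_apply_mem_Ioo f ht),
    apply_noodlePt_of_mem_Ioo f ht, f.symm_apply_apply, base_noodlePt]

theorem height_symm_apply_height_apply (x : X) (t : I) :
    (f.symm (noodlePt (noodleMap f x) (f (noodlePt x t)).height)).height = t := by
  have hcont : Continuous fun t =>
      (f.symm (noodlePt (noodleMap f x) (f (noodlePt x t)).height)).height :=
    continuous_height.comp <| (continuous_apply_noodlePt f.symm _).comp <|
      continuous_height.comp (continuous_apply_noodlePt f x)
  refine congrFun (hcont.ext_on dense_Ioo_zero_one continuous_id fun t ht => ?_) t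
  simp [apply_noodlePt_of_mem_Ioo f ht]

/-- The self-homeomorphism of `[0,1]` by which `f` maps the noodle of `x` to that of
`noodleMap f x`. -/
noncomputable def heightHomeomorph (x : X) : I ≃ₜ I where
  toFun t := (f (noodlePt x t)).height
  invFun t := (f.symm (noodlePt (noodleMap f x) t)).height
  left_inv := height_symm_apply_height_apply f x
  right_inv t := by
    simpa [noodleMap_symm_noodleMap] using height_symm_apply_height_apply f.symm (noodleMap f x) t
  continuous_toFun := continuous_height.comp (continuous_apply_noodlePt f x)
  continuous_invFun := continuous_height.comp (continuous_apply_noodlePt f.symm _)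

theorem noodlePt_specializes_apply (x : X) (t : I) :
    noodlePt (noodleMap f x) (f (noodlePt x t)).height ⤳ f (noodlePt x t) := by
  refine noodlePt_specializes_of_mem_closure
    (map_mem_closure f.continuous (noodlePt_mem_closure_image_Ioo x t) ?_)
  rintro _ ⟨s, hs, rfl⟩
  exact base_apply_eq_noodleMap f hs

theorem inseparable_apply_noodlePt (x : X) (t : I) :
    Inseparable (f (noodlePt x t)) (noodlePt (noodleMap f x) (heightHomeomorph f x t)) := by
  refine Specializes.antisymm ?_ (noodlePt_specializes_apply f x t)
  have hback := noodlePt_specializes_apply f.symm (noodleMap f x) (f (noodlePt x t)).height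
  rw [noodleMap_symm_noodleMap, height_symm_apply_height_apply] at hback
  have hfwd := hback.map f.continuous
  rwa [f.apply_symm_apply] at hfwd

theorem inseparable_symm_apply_noodlePt (x : X) (u : I) :
    Inseparable (f.symm (noodlePt (noodleMap f x) u))
      (noodlePt x ((heightHomeomorph f x).symm u)) := by
  simpa using ((inseparable_apply_noodlePt f x ((heightHomeomorph f x).symm u)).map
    f.symm.continuous).symm

end Homeomorph

section Pointwise

variable [TopologicalSpace X] {ι : Type*} {l : Filter ι} {f : ι → Noodles X ≃ₜ Noodles X}
  {f₀ : Noodles X ≃ₜ Noodles X}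

theorem eventually_noodleMap_eq (hf : ∀ p, Tendsto (fun i => f i p) l (𝓝 (f₀ p))) (x : X) :
    ∀ᶠ i in l, noodleMap (f i) x = noodleMap f₀ x := by
  obtain ⟨t, ht⟩ : (Ioo (0 : I) 1).Nonempty := nonempty_Ioo.2 zero_lt_one
  have hpos : 0 < heightOn (noodleMap f₀ x) (f₀ (noodlePt x t)) :=
    heightOn_pos_iff.2 ⟨base_apply_eq_noodleMap f₀ ht, height_apply_pos f₀ ht⟩
  filter_upwards [hf (noodlePt x t) ((isOpen_heightOn_pos _).mem_nhds hpos)] with i hi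
  exact (base_apply_eq_noodleMap (f i) ht).symm.trans (heightOn_pos_iff.1 hi).1

theorem tendsto_symm_apply (hf : ∀ p, Tendsto (fun i => f i p) l (𝓝 (f₀ p))) (q : Noodles X) :
    Tendsto (fun i => (f i).symm q) l (𝓝 (f₀.symm q)) := by
  obtain ⟨p, rfl⟩ := f₀.surjective q
  set x := p.base
  have hheight (t : I) : Tendsto (fun i => heightHomeomorph (f i) x t) l
      (𝓝 (heightHomeomorph f₀ x t)) :=
    (continuous_height.tendsto _).comp (hf (noodlePt x t))
  have hlim := ((continuous_noodlePt x).tendsto _).comp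
    (tendsto_homeomorph_symm_apply hheight (heightHomeomorph f₀ x p.height))
  have hp : noodlePt x p.height = p := noodlePt_base_height p
  rw [Homeomorph.symm_apply_apply, hp] at hlim
  rw [f₀.symm_apply_apply]
  refine tendsto_nhds_of_eventually_inseparable hlim ?_
  filter_upwards [eventually_noodleMap_eq hf x] with i hi
  have hq : Inseparable (f₀ p) (noodlePt (noodleMap (f i) x) (heightHomeomorph f₀ x p.height)) := by
    rw [hi]
    simpa only [hp] using inseparable_apply_noodlePt f₀ x p.height
  exact (hq.map (f i).symm.continuous).trans (inseparable_symm_apply_noodlePt (f i) x _)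

end Pointwise

end Noodles

/-- For any topological space `X`, inversion `f ↦ f⁻¹` is continuous on `Hom_p(XI)`,
where `XI` is the Alexandroff Noodles of `X`. -/
theorem noodles_inversion_continuous (X : Type*) [TopologicalSpace X] :
    Continuous[homPTop (Noodles X), homPTop (Noodles X)]
      (fun f : Noodles X ≃ₜ Noodles X => f.symm) := by
  let _ := homPTop (Noodles X)
  refine continuous_induced_rng.2 <| continuous_pi fun q =>
    continuous_iff_continuousAt.2 fun f₀ => ?_
  have heval (p : Noodles X) : Tendsto (fun f : Noodles X ≃ₜ Noodles X => f p) (𝓝 f₀) (𝓝 (f₀ p)) :=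
    ((continuous_apply p).comp continuous_induced_dom).tendsto f₀
  exact Noodles.tendsto_symm_apply heval q
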